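/- Let p be a prime and A an abelian group such that A[p] is finite and multiplication by n is surjective on A for every integer n ≥ 1 coprime to p. Then p^∞A = ⋂_{n≥1} pⁿA is a divisible group, and it contains every divisible subgroup of A; that is, p^∞A is the largest divisible subgroup of A. (Abstract form of Lemma 2.9, part 6.) -/

import Mathlib

/-!
Over a principal ideal domain a submodule is divisible as soon as every prime `q` divides it.
Let `N = ⋂ rᵏM`. If `q ∤ r`, divide `x ∈ N` by `q` in `M`; by Bézout the quotient is again in each
`rᵏM`. If `q ∣ r`, it suffices to divide `a ∈ N` by `r`: writing `a = r^(k+1) x_k`, the elements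
`r^k x_k` are quotients of `a` by `r` which differ by elements of `M[r]`. The chain
`M[r] ∩ rᵏM` is stationary from some `n` on, so `r^n x_n` lies in every `rᵏM`.
-/

open Pointwise

section CommRing

variable {R M : Type*} [CommRing R] [AddCommGroup M] [Module R M]

/-- A submodule `N` is divisible if `N = s • N` for every nonzero scalar `s`; only the nontrivial
inclusion is recorded. For `R = ℤ` this is divisibility of a subgroup of an abelian group. -/
def IsDivisibleSubmodule (N : Submodule R M) : Prop :=
  ∀ s : R, s ≠ 0 → N ≤ s • N

variable (M) in
/-- The submodule `⋂ₖ rᵏM` of elements of infinite `r`-height, written `p^∞A` for a prime `p` and an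
abelian group `A`. The harmless term `k = 0` is included. -/
def infiniteHeight (r : R) : Submodule R M :=
  ⨅ k : ℕ, r ^ k • ⊤

theorem mem_smul_top_iff {r : R} {a : M} :
    a ∈ r • (⊤ : Submodule R M) ↔ ∃ x, r • x = a := by
  simp only [Submodule.mem_smul_pointwise_iff_exists, Submodule.mem_top, true_and]

theorem mem_infiniteHeight {r : R} {a : M} :
    a ∈ infiniteHeight M r ↔ ∀ k : ℕ, a ∈ r ^ k • (⊤ : Submodule R M) :=
  Submodule.mem_iInf _

theorem antitone_pow_smul_top (r : R) : Antitone fun k : ℕ ↦ r ^ k • (⊤ : Submodule R M) :=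
  antitone_nat_of_succ_le fun k ↦ by
    rw [pow_succ, mul_smul]
    exact smul_mono_right _ le_top

theorem IsDivisibleSubmodule.le_infiniteHeight [IsReduced R] {N : Submodule R M}
    (hN : IsDivisibleSubmodule N) {r : R} (hr : r ≠ 0) : N ≤ infiniteHeight M r :=
  le_iInf fun k ↦ (hN _ (pow_ne_zero k hr)).trans (smul_mono_right _ le_top)

theorem isDivisibleSubmodule_of_forall_prime [IsDomain R] [UniqueFactorizationMonoid R]
    {N : Submodule R M} (hN : ∀ q : R, Prime q → N ≤ q • N) : IsDivisibleSubmodule N := by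
  intro s
  induction s using UniqueFactorizationMonoid.induction_on_prime with
  | h₁ => exact fun h ↦ absurd rfl h
  | h₂ u hu =>
    obtain ⟨v, huv⟩ := hu.exists_right_inv
    exact fun _ x hx ↦ (Submodule.mem_smul_pointwise_iff_exists _ _ _).mpr
      ⟨v • x, N.smul_mem v hx, by rw [smul_smul, huv, one_smul]⟩
  | h₃ s q hs hq ih =>
    intro _
    calc
      N ≤ q • N := hN q hq
      _ ≤ q • s • N := smul_mono_right q (ih hs)
      _ = (q * s) • N := (mul_smul q s N).symm

theorem mem_smul_of_isCoprime {q r : R} (hqr : IsCoprime q r) {N : Submodule R M} {y : M}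
    (hy : y ∈ N) (hqy : q • y ∈ r • N) : y ∈ r • N := by
  obtain ⟨u, v, huv⟩ := hqr
  have bezout : y = u • q • y + v • r • y := by
    rw [smul_smul, smul_smul, ← add_smul, huv, one_smul]
  rw [bezout]
  exact add_mem (Submodule.smul_mem _ u hqy)
    (Submodule.smul_mem _ v (Submodule.smul_mem_pointwise_smul y r N hy))

theorem infiniteHeight_le_smul_of_isCoprime {q r : R} (hqr : IsCoprime q r)
    (hq : Function.Surjective fun x : M ↦ q • x) :
    infiniteHeight M r ≤ q • infiniteHeight M r := by
  intro x hx
  obtain ⟨y, rfl⟩ := hq x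
  refine Submodule.smul_mem_pointwise_smul y q _ (mem_infiniteHeight.mpr fun k ↦ ?_)
  exact mem_smul_of_isCoprime hqr.pow_right Submodule.mem_top (mem_infiniteHeight.mp hx k)

theorem exists_torsionBy_inf_pow_smul_top_le (r : R) [IsArtinian R (Submodule.torsionBy R M r)] :
    ∃ n : ℕ, ∀ k, Submodule.torsionBy R M r ⊓ r ^ n • ⊤ ≤ r ^ k • ⊤ := by
  let T := Submodule.torsionBy R M r
  let heightInTorsion (k : ℕ) : Submodule R T := (r ^ k • ⊤ : Submodule R M).comap T.subtype
  have antitone : Antitone heightInTorsion := fun _ _ hkl ↦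
    Submodule.comap_mono (antitone_pow_smul_top r hkl)
  obtain ⟨n, hn⟩ := IsArtinian.monotone_stabilizes ⟨_, antitone.dual_right⟩
  refine ⟨n, fun k x ⟨hxT, hxn⟩ ↦ ?_⟩
  have stable : heightInTorsion n = heightInTorsion (max n k) := hn _ (le_max_left n k)
  have hx : (⟨x, hxT⟩ : T) ∈ heightInTorsion (max n k) := stable.le hxn
  exact antitone_pow_smul_top r (le_max_right n k) hx

theorem infiniteHeight_le_smul_self (r : R) [IsArtinian R (Submodule.torsionBy R M r)] :
    infiniteHeight M r ≤ r • infiniteHeight M r := by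
  intro a ha
  have exists_quotient (k : ℕ) : ∃ b ∈ r ^ k • (⊤ : Submodule R M), r • b = a := by
    have := mem_infiniteHeight.mp ha (k + 1)
    rwa [pow_succ', mul_smul, Submodule.mem_smul_pointwise_iff_exists] at this
  choose b hb hba using exists_quotient
  obtain ⟨n, hn⟩ := exists_torsionBy_inf_pow_smul_top_le (M := M) r
  refine (Submodule.mem_smul_pointwise_iff_exists _ _ _).mpr
    ⟨b n, mem_infiniteHeight.mpr fun k ↦ ?_, hba n⟩
  obtain hkn | hnk := le_total k n
  · exact antitone_pow_smul_top r hkn (hb n)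
  · have sub_torsion : b n - b k ∈ Submodule.torsionBy R M r := by
      rw [Submodule.mem_torsionBy_iff, smul_sub, hba, hba, sub_self]
    have sub_height : b n - b k ∈ r ^ n • (⊤ : Submodule R M) :=
      sub_mem (hb n) (antitone_pow_smul_top r hnk (hb k))
    exact (Submodule.sub_mem_iff_left _ (hb k)).mp (hn k ⟨sub_torsion, sub_height⟩)

theorem infiniteHeight_le_smul_of_dvd {q r : R} [IsArtinian R (Submodule.torsionBy R M r)]
    (hqr : q ∣ r) : infiniteHeight M r ≤ q • infiniteHeight M r := by
  obtain ⟨c, rfl⟩ := hqr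
  refine (infiniteHeight_le_smul_self (q * c)).trans ?_
  rw [mul_smul]
  exact smul_mono_right q (Submodule.smul_le_self_of_tower c _)

theorem stmt_6_general [IsDomain R] [IsPrincipalIdealRing R] {r : R} (hr : r ≠ 0)
    [IsArtinian R (Submodule.torsionBy R M r)]
    (hdiv : ∀ q : R, Prime q → ¬ q ∣ r → Function.Surjective fun x : M ↦ q • x) :
    IsGreatest {N : Submodule R M | IsDivisibleSubmodule N} (infiniteHeight M r) := by
  refine ⟨isDivisibleSubmodule_of_forall_prime fun q hq ↦ ?_, fun N hN ↦ hN.le_infiniteHeight hr⟩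
  by_cases hqr : q ∣ r
  · exact infiniteHeight_le_smul_of_dvd hqr
  · exact infiniteHeight_le_smul_of_isCoprime (hq.coprime_iff_not_dvd.mpr hqr) (hdiv q hq hqr)

end CommRing

section AddCommGroup

variable {A : Type*} [AddCommGroup A]

theorem mem_infiniteHeight_natCast {p : ℕ} {a : A} :
    a ∈ infiniteHeight A (p : ℤ) ↔ ∀ k : ℕ, 1 ≤ k → ∃ x : A, p ^ k • x = a := by
  simp only [mem_infiniteHeight, mem_smul_top_iff, ← Nat.cast_pow, natCast_zsmul]
  refine ⟨fun h k _ ↦ h k, fun h k ↦ ?_⟩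
  obtain rfl | hk := k.eq_zero_or_pos
  · exact ⟨a, by rw [pow_zero, one_smul]⟩
  · exact h k hk

theorem zsmul_sign_zsmul (n : ℤ) (x : A) : n • n.sign • x = n.natAbs • x := by
  rw [smul_smul, Int.mul_sign_self, natCast_zsmul]

theorem isDivisibleSubmodule_int_iff {N : Submodule ℤ A} :
    IsDivisibleSubmodule N ↔ ∀ d ∈ N, ∀ n : ℕ, 1 ≤ n → ∃ e ∈ N, n • e = d := by
  refine ⟨fun hN d hd n hn ↦ ?_, fun hN s hs d hd ↦ ?_⟩
  · simpa only [Submodule.mem_smul_pointwise_iff_exists, natCast_zsmul]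
      using hN n (Nat.cast_ne_zero.mpr (Nat.one_le_iff_ne_zero.mp hn)) hd
  · obtain ⟨e, he, rfl⟩ := hN d hd s.natAbs (Int.natAbs_pos.mpr hs)
    rw [← zsmul_sign_zsmul]
    exact Submodule.smul_mem_pointwise_smul _ s N (N.smul_mem s.sign he)

theorem zsmul_surjective_of_natAbs {n : ℤ} (hn : Function.Surjective fun x : A ↦ n.natAbs • x) :
    Function.Surjective fun x : A ↦ n • x := fun a ↦
  let ⟨x, hx⟩ := hn a
  ⟨n.sign • x, (zsmul_sign_zsmul n x).trans hx⟩

theorem zsmul_surjective_of_prime_not_dvd {p : ℕ}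
    (hdiv : ∀ n : ℕ, 1 ≤ n → n.Coprime p → Function.Surjective fun x : A ↦ n • x)
    (q : ℤ) (hq : Prime q) (hqp : ¬ q ∣ p) : Function.Surjective fun x : A ↦ q • x := by
  have hcop : q.natAbs.Coprime p :=
    Int.isCoprime_iff_nat_coprime.mp (hq.coprime_iff_not_dvd.mpr hqp)
  exact zsmul_surjective_of_natAbs (hdiv _ (Int.natAbs_pos.mpr hq.ne_zero) hcop)

theorem isArtinian_torsionBy_natCast {p : ℕ} (hfin : {x : A | p • x = 0}.Finite) :
    IsArtinian ℤ (Submodule.torsionBy ℤ A (p : ℤ)) := by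
  have : Finite (Submodule.torsionBy ℤ A (p : ℤ)) :=
    hfin.subset fun x hx ↦ (natCast_zsmul x p).symm.trans hx
  exact isArtinian_of_finite

theorem isGreatest_infiniteHeight_natCast_iff {p : ℕ} :
    IsGreatest {N : Submodule ℤ A | IsDivisibleSubmodule N} (infiniteHeight A (p : ℤ)) ↔
      (∀ a : A, (∀ k : ℕ, 1 ≤ k → ∃ x : A, p ^ k • x = a) → ∀ n : ℕ, 1 ≤ n →
        ∃ b : A, (∀ k : ℕ, 1 ≤ k → ∃ x : A, p ^ k • x = b) ∧ n • b = a) ∧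
      (∀ H : AddSubgroup A, (∀ d ∈ H, ∀ n : ℕ, 1 ≤ n → ∃ e ∈ H, n • e = d) →
        ∀ x ∈ H, ∀ k : ℕ, 1 ≤ k → ∃ y : A, p ^ k • y = x) := by
  simp only [IsGreatest, mem_upperBounds, Set.mem_ofPred_eq, isDivisibleSubmodule_int_iff,
    SetLike.le_def, mem_infiniteHeight_natCast]
  exact and_congr_right fun _ ↦ AddSubgroup.toIntSubmodule.surjective.forall

end AddCommGroup

/-- Let `p` be a prime and `A` an abelian group with `A[p]` finite, on which multiplication
by every `n ≥ 1` coprime to `p` is surjective. Then `p^∞A = ⋂_{n≥1} pⁿA` is a divisible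
group and contains every divisible subgroup of `A`: it is the largest divisible subgroup. -/
theorem stmt_6 {A : Type*} [AddCommGroup A] (p : ℕ) (hp : p.Prime)
    (hfin : {x : A | p • x = 0}.Finite)
    (hdiv : ∀ n : ℕ, 1 ≤ n → Nat.Coprime n p → Function.Surjective (fun x : A => n • x)) :
    (∀ a : A, (∀ k : ℕ, 1 ≤ k → ∃ x : A, p ^ k • x = a) → ∀ n : ℕ, 1 ≤ n →
        ∃ b : A, (∀ k : ℕ, 1 ≤ k → ∃ x : A, p ^ k • x = b) ∧ n • b = a) ∧
    (∀ H : AddSubgroup A, (∀ d ∈ H, ∀ n : ℕ, 1 ≤ n → ∃ e ∈ H, n • e = d) →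
        ∀ x ∈ H, ∀ k : ℕ, 1 ≤ k → ∃ y : A, p ^ k • y = x) := by
  have := isArtinian_torsionBy_natCast hfin
  exact isGreatest_infiniteHeight_natCast_iff.mp <|
    stmt_6_general (Nat.cast_ne_zero.mpr hp.ne_zero) (zsmul_surjective_of_prime_not_dvd hdiv)
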